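/- Let |W⟩ = (|100⟩ + |010⟩ + |001⟩)/√3 in (C²)^⊗3 and, for 3/4 < v ≤ 1, let ρ(v) = v|W⟩⟨W| + (1−v)·1₈/8. Then ρ(v) is not a triangle network state with local channels: there exist no d ≥ 1, density matrices ρ_a, ρ_b, ρ_c on C^d ⊗ C^d and quantum channels E_A, E_B, E_C from (C^d ⊗ C^d)-matrices to 2×2 matrices such that (E_A ⊗ E_B ⊗ E_C)(ρ_b ⊗ ρ_c ⊗ ρ_a) = ρ(v), where the tensor factors are arranged in the basic triangle network ordering. -/

import Mathlib

open Matrix Kronecker BigOperators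
open scoped ComplexOrder

noncomputable section

/-- Covariance matrix of a family of observables `M` in the state `ρ`. -/
def covMat {n ι : Type*} [Fintype n] (M : ι → Matrix n n ℂ) (ρ : Matrix n n ℂ) :
    Matrix ι ι ℂ :=
  Matrix.of fun i j => (M i * M j * ρ).trace - (M i * ρ).trace * (M j * ρ).trace

/-- A density matrix: positive semidefinite with unit trace. -/
def IsDensity {n : Type*} [Fintype n] (ρ : Matrix n n ℂ) : Prop :=
  ρ.PosSemidef ∧ ρ.trace = 1

/-- Partial trace over the first tensor factor. -/
def ptrace₁ {m n : Type*} [Fintype m] (M : Matrix (m × n) (m × n) ℂ) : Matrix n n ℂ :=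
  Matrix.of fun i j => ∑ k, M (k, i) (k, j)

/-- Partial trace over the second tensor factor. -/
def ptrace₂ {m n : Type*} [Fintype n] (M : Matrix (m × n) (m × n) ℂ) : Matrix m m ℂ :=
  Matrix.of fun i j => ∑ k, M (i, k) (j, k)

/-- Index of a two-qudit space. -/
abbrev D2 (d : ℕ) := Fin d × Fin d

/-- Index of the six-factor triangle-network space, ordered C₂, A₁, A₂, B₁, B₂, C₁. -/
abbrev TriIdx (d : ℕ) := D2 d × (D2 d × D2 d)

/-- The basic triangle network state `ρ_b ⊗ ρ_c ⊗ ρ_a`. -/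
def btnState {d : ℕ} (ρa ρb ρc : Matrix (D2 d) (D2 d) ℂ) :
    Matrix (TriIdx d) (TriIdx d) ℂ :=
  ρb ⊗ₖ (ρc ⊗ₖ ρa)

/-- Embed an observable of Alice (acting on A₁A₂) into the global space. -/
def embedA {d : ℕ} (M : Matrix (D2 d) (D2 d) ℂ) : Matrix (TriIdx d) (TriIdx d) ℂ :=
  Matrix.of fun p q =>
    if p.1.1 = q.1.1 ∧ p.2.1.2 = q.2.1.2 ∧ p.2.2 = q.2.2
    then M (p.1.2, p.2.1.1) (q.1.2, q.2.1.1) else 0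

/-- Embed an observable of Bob (acting on B₁B₂) into the global space. -/
def embedB {d : ℕ} (M : Matrix (D2 d) (D2 d) ℂ) : Matrix (TriIdx d) (TriIdx d) ℂ :=
  Matrix.of fun p q =>
    if p.1 = q.1 ∧ p.2.1.1 = q.2.1.1 ∧ p.2.2.2 = q.2.2.2
    then M (p.2.1.2, p.2.2.1) (q.2.1.2, q.2.2.1) else 0

/-- Embed an observable of Charlie (acting on C₁C₂) into the global space. -/
def embedC {d : ℕ} (M : Matrix (D2 d) (D2 d) ℂ) : Matrix (TriIdx d) (TriIdx d) ℂ :=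
  Matrix.of fun p q =>
    if p.1.2 = q.1.2 ∧ p.2.1 = q.2.1 ∧ p.2.2.1 = q.2.2.1
    then M (p.2.2.2, p.1.1) (q.2.2.2, q.1.1) else 0

section marginals
variable {d : ℕ} (ρa ρb ρc : Matrix (D2 d) (D2 d) ℂ)

/-- Marginal of ρ_BTN on A₁ (second factor of ρ_b = ρ^{C₂A₁}). -/
def margA1 : Matrix (Fin d) (Fin d) ℂ := ptrace₁ ρb
/-- Marginal on C₂. -/
def margC2 : Matrix (Fin d) (Fin d) ℂ := ptrace₂ ρb
/-- Marginal on A₂ (first factor of ρ_c = ρ^{A₂B₁}). -/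
def margA2 : Matrix (Fin d) (Fin d) ℂ := ptrace₂ ρc
/-- Marginal on B₁. -/
def margB1 : Matrix (Fin d) (Fin d) ℂ := ptrace₁ ρc
/-- Marginal on B₂ (first factor of ρ_a = ρ^{B₂C₁}). -/
def margB2 : Matrix (Fin d) (Fin d) ℂ := ptrace₂ ρa
/-- Marginal on C₁. -/
def margC1 : Matrix (Fin d) (Fin d) ℂ := ptrace₁ ρa

/-- Reduced observable A^(2) = tr_{A₁}(A (ρ^{A₁} ⊗ 1)). -/
def redA2 (M : Matrix (D2 d) (D2 d) ℂ) : Matrix (Fin d) (Fin d) ℂ :=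
  ptrace₁ (M * (margA1 ρb ⊗ₖ (1 : Matrix (Fin d) (Fin d) ℂ)))
/-- Reduced observable A^(1) = tr_{A₂}(A (1 ⊗ ρ^{A₂})). -/
def redA1 (M : Matrix (D2 d) (D2 d) ℂ) : Matrix (Fin d) (Fin d) ℂ :=
  ptrace₂ (M * ((1 : Matrix (Fin d) (Fin d) ℂ) ⊗ₖ margA2 ρc))
/-- Reduced observable B^(1) = tr_{B₂}(B (1 ⊗ ρ^{B₂})). -/
def redB1 (M : Matrix (D2 d) (D2 d) ℂ) : Matrix (Fin d) (Fin d) ℂ :=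
  ptrace₂ (M * ((1 : Matrix (Fin d) (Fin d) ℂ) ⊗ₖ margB2 ρa))
/-- Reduced observable B^(2) = tr_{B₁}(B (ρ^{B₁} ⊗ 1)). -/
def redB2 (M : Matrix (D2 d) (D2 d) ℂ) : Matrix (Fin d) (Fin d) ℂ :=
  ptrace₁ (M * (margB1 ρc ⊗ₖ (1 : Matrix (Fin d) (Fin d) ℂ)))
/-- Reduced observable C^(1) = tr_{C₂}(C (1 ⊗ ρ^{C₂})); here C acts on C₁C₂. -/
def redC1 (M : Matrix (D2 d) (D2 d) ℂ) : Matrix (Fin d) (Fin d) ℂ :=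
  ptrace₂ (M * ((1 : Matrix (Fin d) (Fin d) ℂ) ⊗ₖ margC2 ρb))
/-- Reduced observable C^(2) = tr_{C₁}(C (ρ^{C₁} ⊗ 1)). -/
def redC2 (M : Matrix (D2 d) (D2 d) ℂ) : Matrix (Fin d) (Fin d) ℂ :=
  ptrace₁ (M * (margC1 ρa ⊗ₖ (1 : Matrix (Fin d) (Fin d) ℂ)))

end marginals


/-- The global Kraus operator `K_A ⊗ K_B ⊗ K_C`, mapping the six-factor
triangle-network space (ordered C₂, A₁, A₂, B₁, B₂, C₁) to the output space
of the three parties. -/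
def globalKraus {d nA nB nC : ℕ}
    (KA : Matrix (Fin nA) (D2 d) ℂ) (KB : Matrix (Fin nB) (D2 d) ℂ)
    (KC : Matrix (Fin nC) (D2 d) ℂ) :
    Matrix (Fin nA × Fin nB × Fin nC) (TriIdx d) ℂ :=
  Matrix.of fun o i =>
    KA o.1 (i.1.2, i.2.1.1) * KB o.2.1 (i.2.1.2, i.2.2.1) * KC o.2.2 (i.2.2.2, i.1.1)

/-- The triangle network state with local channels,
`(E_A ⊗ E_B ⊗ E_C)(ρ_BTN)`, with the channels given by Kraus operators. -/
def ctnState {d nA nB nC LA LB LC : ℕ}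
    (ρa ρb ρc : Matrix (D2 d) (D2 d) ℂ)
    (KA : Fin LA → Matrix (Fin nA) (D2 d) ℂ)
    (KB : Fin LB → Matrix (Fin nB) (D2 d) ℂ)
    (KC : Fin LC → Matrix (Fin nC) (D2 d) ℂ) :
    Matrix (Fin nA × Fin nB × Fin nC) (Fin nA × Fin nB × Fin nC) ℂ :=
  ∑ l, ∑ m, ∑ n,
    globalKraus (KA l) (KB m) (KC n) * btnState ρa ρb ρc *
      (globalKraus (KA l) (KB m) (KC n))ᴴ

/-- Embed an observable of Alice into the tripartite output space. -/
def outA {nA nB nC : ℕ} (M : Matrix (Fin nA) (Fin nA) ℂ) :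
    Matrix (Fin nA × Fin nB × Fin nC) (Fin nA × Fin nB × Fin nC) ℂ :=
  M ⊗ₖ (1 : Matrix (Fin nB × Fin nC) (Fin nB × Fin nC) ℂ)

/-- Embed an observable of Bob into the tripartite output space. -/
def outB {nA nB nC : ℕ} (M : Matrix (Fin nB) (Fin nB) ℂ) :
    Matrix (Fin nA × Fin nB × Fin nC) (Fin nA × Fin nB × Fin nC) ℂ :=
  Matrix.of fun p q => if p.1 = q.1 ∧ p.2.2 = q.2.2 then M p.2.1 q.2.1 else 0

/-- Embed an observable of Charlie into the tripartite output space. -/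
def outC {nA nB nC : ℕ} (M : Matrix (Fin nC) (Fin nC) ℂ) :
    Matrix (Fin nA × Fin nB × Fin nC) (Fin nA × Fin nB × Fin nC) ℂ :=
  (1 : Matrix (Fin nA) (Fin nA) ℂ) ⊗ₖ ((1 : Matrix (Fin nB) (Fin nB) ℂ) ⊗ₖ M)

/-- The three-qubit W state vector `(|100⟩ + |010⟩ + |001⟩)/√3`. -/
def wVec : Fin 2 × Fin 2 × Fin 2 → ℂ := fun i =>
  if i = (1, 0, 0) ∨ i = (0, 1, 0) ∨ i = (0, 0, 1) then ((Real.sqrt 3)⁻¹ : ℝ) else 0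

/-- The W state mixed with white noise, `v |W⟩⟨W| + (1−v) 1/8`. -/
def wNoisy (v : ℝ) : Matrix (Fin 2 × Fin 2 × Fin 2) (Fin 2 × Fin 2 × Fin 2) ℂ :=
  (v : ℂ) • vecMulVec wVec (star wVec) +
    ((1 - v : ℝ) : ℂ) • ((8 : ℂ)⁻¹ • (1 : Matrix (Fin 2 × Fin 2 × Fin 2) (Fin 2 × Fin 2 × Fin 2) ℂ))

/-! Pass to the Heisenberg picture, so that each channel turns an output observable into an
observable on the two source halves its party holds. These halves are in a product state, hence the
variance of that observable is at least the sum of the variances of its two reduced observables,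
each obtained by averaging out one half (an Efron–Stein inequality), and by Kadison–Schwarz it is
at most the variance of the output observable. The covariance of two parties is the covariance of
two reduced observables in the one source they share, so twice it is at most the sum of their
variances there. Every reduced observable belongs to exactly one source, and therefore
`2 * (Cov(A,B) + Cov(B,C) + Cov(C,A)) ≤ Var(A) + Var(B) + Var(C)`.
For the noisy W state and the three observables `σ_x` this reads `4 * v ≤ 3`. -/

section Covariance

variable {m n : Type*} [Fintype m] [Fintype n]

/-- Covariance `⟨MN⟩ - ⟨M⟩⟨N⟩` of two observables in the state `ρ`, the entry of `covMat` that
belongs to `M` and `N`. -/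
def quantumCov (ρ M N : Matrix n n ℂ) : ℂ :=
  (M * N * ρ).trace - (M * ρ).trace * (N * ρ).trace

/-- Variance of an observable in the state `ρ`. -/
abbrev quantumVar (ρ M : Matrix n n ℂ) : ℂ := quantumCov ρ M M

lemma quantumCov_sub_left (ρ M M' N : Matrix n n ℂ) :
    quantumCov ρ (M - M') N = quantumCov ρ M N - quantumCov ρ M' N := by
  simp only [quantumCov, Matrix.sub_mul, trace_sub]
  ring

lemma quantumCov_sub_right (ρ M N N' : Matrix n n ℂ) :
    quantumCov ρ M (N - N') = quantumCov ρ M N - quantumCov ρ M N' := by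
  simp only [quantumCov, Matrix.sub_mul, Matrix.mul_sub, trace_sub]
  ring

lemma trace_submatrix_equiv (e : m ≃ n) (M : Matrix n n ℂ) :
    (M.submatrix e e).trace = M.trace :=
  e.sum_comp fun i => M i i

lemma quantumCov_submatrix_equiv (e : m ≃ n) (ρ M N : Matrix n n ℂ) :
    quantumCov (ρ.submatrix e e) (M.submatrix e e) (N.submatrix e e) = quantumCov ρ M N := by
  simp only [quantumCov, submatrix_mul_equiv, trace_submatrix_equiv]

lemma trace_conjTranspose_mul_self_mul_nonneg {ρ : Matrix n n ℂ} (hρ : ρ.PosSemidef)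
    (Y : Matrix m n ℂ) : 0 ≤ (Yᴴ * Y * ρ).trace := by
  rw [Matrix.mul_assoc, trace_mul_comm]
  exact (hρ.mul_mul_conjTranspose_same Y).trace_nonneg

lemma quantumVar_nonneg {ρ M : Matrix n n ℂ} (hρ : IsDensity ρ) (hM : M.IsHermitian) :
    0 ≤ quantumVar ρ M := by
  classical
  set μ := (M * ρ).trace with hμ
  have centred := trace_conjTranspose_mul_self_mul_nonneg hρ.1 (M - μ • (1 : Matrix n n ℂ))
  convert centred using 1
  simp only [quantumVar, quantumCov, conjTranspose_sub, conjTranspose_smul, conjTranspose_one,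
    hM.eq, Matrix.sub_mul, Matrix.mul_sub, Matrix.smul_mul, Matrix.mul_smul, Matrix.one_mul,
    Matrix.mul_one, trace_sub, trace_smul, smul_eq_mul, hρ.2, ← hμ]
  ring

end Covariance

section ReducedObservable

variable {m n : Type*}

lemma ptrace₁_posSemidef [Fintype m] {M : Matrix (m × n) (m × n) ℂ} (hM : M.PosSemidef) :
    (ptrace₁ M).PosSemidef := by
  have ptrace₁_eq_sum : ptrace₁ M = ∑ k, M.submatrix (fun i => (k, i)) (fun i => (k, i)) := by
    ext i j
    simp only [ptrace₁, of_apply, Matrix.sum_apply, submatrix_apply]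
  exact ptrace₁_eq_sum ▸ posSemidef_sum _ fun k _ => hM.submatrix _

lemma ptrace₂_posSemidef [Fintype n] {M : Matrix (m × n) (m × n) ℂ} (hM : M.PosSemidef) :
    (ptrace₂ M).PosSemidef := by
  have ptrace₂_eq_sum : ptrace₂ M = ∑ k, M.submatrix (fun i => (i, k)) (fun i => (i, k)) := by
    ext i j
    simp only [ptrace₂, of_apply, Matrix.sum_apply, submatrix_apply]
  exact ptrace₂_eq_sum ▸ posSemidef_sum _ fun k _ => hM.submatrix _

variable [Fintype m] [Fintype n]

lemma trace_ptrace₁ (M : Matrix (m × n) (m × n) ℂ) : (ptrace₁ M).trace = M.trace := by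
  simp only [Matrix.trace, ptrace₁, diag_apply, of_apply, Fintype.sum_prod_type_right]

lemma trace_ptrace₂ (M : Matrix (m × n) (m × n) ℂ) : (ptrace₂ M).trace = M.trace := by
  simp only [Matrix.trace, ptrace₂, diag_apply, of_apply, Fintype.sum_prod_type]

lemma IsDensity.ptrace₁ {ρ : Matrix (m × n) (m × n) ℂ} (hρ : IsDensity ρ) :
    IsDensity (ptrace₁ ρ) :=
  ⟨ptrace₁_posSemidef hρ.1, (trace_ptrace₁ ρ).trans hρ.2⟩

lemma IsDensity.ptrace₂ {ρ : Matrix (m × n) (m × n) ℂ} (hρ : IsDensity ρ) :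
    IsDensity (ptrace₂ ρ) :=
  ⟨ptrace₂_posSemidef hρ.1, (trace_ptrace₂ ρ).trans hρ.2⟩

lemma IsDensity.kronecker {σ : Matrix m m ℂ} {τ : Matrix n n ℂ} (hσ : IsDensity σ)
    (hτ : IsDensity τ) : IsDensity (σ ⊗ₖ τ) :=
  ⟨hσ.1.kronecker hτ.1, by rw [trace_kronecker, hσ.2, hτ.2, one_mul]⟩

lemma trace_kronecker_one_mul [DecidableEq n] (P : Matrix m m ℂ) (N : Matrix (m × n) (m × n) ℂ) :
    ((P ⊗ₖ (1 : Matrix n n ℂ)) * N).trace = (P * ptrace₂ N).trace := by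
  simp only [Matrix.trace, diag_apply, mul_apply, kroneckerMap_apply, one_apply, ptrace₂, of_apply,
    Fintype.sum_prod_type, Finset.mul_sum, mul_ite, mul_one, mul_zero, ite_mul, zero_mul,
    Finset.sum_ite_eq, Finset.mem_univ, if_true]
  exact Finset.sum_congr rfl fun i _ => Finset.sum_comm

lemma trace_one_kronecker_mul [DecidableEq m] (Q : Matrix n n ℂ) (N : Matrix (m × n) (m × n) ℂ) :
    (((1 : Matrix m m ℂ) ⊗ₖ Q) * N).trace = (Q * ptrace₁ N).trace := by
  simp only [Matrix.trace, diag_apply, mul_apply, kroneckerMap_apply, one_apply, ptrace₁, of_apply,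
    Fintype.sum_prod_type_right, Finset.mul_sum, one_mul, zero_mul, ite_mul,
    Finset.sum_ite_eq, Finset.mem_univ, if_true]
  exact Finset.sum_congr rfl fun i _ => Finset.sum_comm

/-- The observable on the first factor obtained from `M` by averaging the second factor over the
state `τ`; the reduced observables with superscript `(1)` are of this form. -/
def redFst [DecidableEq m] (τ : Matrix n n ℂ) (M : Matrix (m × n) (m × n) ℂ) : Matrix m m ℂ :=
  ptrace₂ (M * ((1 : Matrix m m ℂ) ⊗ₖ τ))

/-- The observable on the second factor obtained from `M` by averaging the first factor over the
state `σ`; the reduced observables with superscript `(2)` are of this form. -/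
def redSnd [DecidableEq n] (σ : Matrix m m ℂ) (M : Matrix (m × n) (m × n) ℂ) : Matrix n n ℂ :=
  ptrace₁ (M * (σ ⊗ₖ (1 : Matrix n n ℂ)))

lemma redFst_apply [DecidableEq m] (τ : Matrix n n ℂ) (M : Matrix (m × n) (m × n) ℂ) (i j : m) :
    redFst τ M i j = ∑ k, ∑ k', M (i, k) (j, k') * τ k' k := by
  simp [redFst, ptrace₂, mul_apply, one_apply, Fintype.sum_prod_type_right]

lemma redSnd_apply [DecidableEq n] (σ : Matrix m m ℂ) (M : Matrix (m × n) (m × n) ℂ) (i j : n) :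
    redSnd σ M i j = ∑ k, ∑ k', M (k, i) (k', j) * σ k' k := by
  simp [redSnd, ptrace₁, mul_apply, one_apply, Fintype.sum_prod_type]

lemma redFst_isHermitian [DecidableEq m] {τ : Matrix n n ℂ} {M : Matrix (m × n) (m × n) ℂ}
    (hτ : τ.IsHermitian) (hM : M.IsHermitian) : (redFst τ M).IsHermitian := by
  ext i j
  rw [conjTranspose_apply, redFst_apply, redFst_apply, Finset.sum_comm]
  simp only [star_sum, star_mul', hM.apply, hτ.apply]

lemma redSnd_isHermitian [DecidableEq n] {σ : Matrix m m ℂ} {M : Matrix (m × n) (m × n) ℂ}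
    (hσ : σ.IsHermitian) (hM : M.IsHermitian) : (redSnd σ M).IsHermitian := by
  ext i j
  rw [conjTranspose_apply, redSnd_apply, redSnd_apply, Finset.sum_comm]
  simp only [star_sum, star_mul', hM.apply, hσ.apply]

lemma trace_mul_kronecker_eq_redFst [DecidableEq m] (M : Matrix (m × n) (m × n) ℂ)
    (P : Matrix m m ℂ) (Q : Matrix n n ℂ) : (M * (P ⊗ₖ Q)).trace = (redFst Q M * P).trace := by
  classical
  rw [trace_mul_comm _ P, redFst, ← trace_kronecker_one_mul, trace_mul_comm _ (M * _),
    Matrix.mul_assoc, ← mul_kronecker_mul, Matrix.one_mul, Matrix.mul_one]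

lemma trace_mul_kronecker_eq_redSnd [DecidableEq n] (M : Matrix (m × n) (m × n) ℂ)
    (P : Matrix m m ℂ) (Q : Matrix n n ℂ) : (M * (P ⊗ₖ Q)).trace = (redSnd P M * Q).trace := by
  classical
  rw [trace_mul_comm _ Q, redSnd, ← trace_one_kronecker_mul, trace_mul_comm _ (M * _),
    Matrix.mul_assoc, ← mul_kronecker_mul, Matrix.one_mul, Matrix.mul_one]

variable [DecidableEq m] [DecidableEq n]

lemma redFst_kronecker_one {τ : Matrix n n ℂ} (hτ : τ.trace = 1) (P : Matrix m m ℂ) :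
    redFst τ (P ⊗ₖ (1 : Matrix n n ℂ)) = P := by
  ext i j
  simp only [redFst, ← mul_kronecker_mul, Matrix.mul_one, Matrix.one_mul, ptrace₂, of_apply,
    kroneckerMap_apply, ← Finset.mul_sum]
  exact (congrArg _ hτ).trans (mul_one _)

lemma redSnd_one_kronecker {σ : Matrix m m ℂ} (hσ : σ.trace = 1) (Q : Matrix n n ℂ) :
    redSnd σ ((1 : Matrix m m ℂ) ⊗ₖ Q) = Q := by
  ext i j
  simp only [redSnd, ← mul_kronecker_mul, Matrix.mul_one, Matrix.one_mul, ptrace₁, of_apply,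
    kroneckerMap_apply, ← Finset.sum_mul]
  exact (congrArg (· * Q i j) hσ).trans (one_mul _)

lemma redFst_one {τ : Matrix n n ℂ} (hτ : τ.trace = 1) :
    redFst τ (1 : Matrix (m × n) (m × n) ℂ) = 1 := by
  rw [← one_kronecker_one, redFst_kronecker_one hτ]

lemma redSnd_one {σ : Matrix m m ℂ} (hσ : σ.trace = 1) :
    redSnd σ (1 : Matrix (m × n) (m × n) ℂ) = 1 := by
  rw [← one_kronecker_one, redSnd_one_kronecker hσ]

end ReducedObservable

section Bipartite

variable {m n : Type*}

lemma isHermitian_kronecker {P : Matrix m m ℂ} {Q : Matrix n n ℂ} (hP : P.IsHermitian)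
    (hQ : Q.IsHermitian) : (P ⊗ₖ Q).IsHermitian := by
  rw [IsHermitian, conjTranspose_kronecker, hP.eq, hQ.eq]

variable [Fintype m] [Fintype n]

lemma quantumVar_kronecker_one [DecidableEq n] (ρ : Matrix (m × n) (m × n) ℂ) (P : Matrix m m ℂ) :
    quantumVar ρ (P ⊗ₖ (1 : Matrix n n ℂ)) = quantumVar (ptrace₂ ρ) P := by
  simp only [quantumVar, quantumCov, ← mul_kronecker_mul, Matrix.mul_one, trace_kronecker_one_mul]

lemma quantumVar_one_kronecker [DecidableEq m] (ρ : Matrix (m × n) (m × n) ℂ) (Q : Matrix n n ℂ) :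
    quantumVar ρ ((1 : Matrix m m ℂ) ⊗ₖ Q) = quantumVar (ptrace₁ ρ) Q := by
  simp only [quantumVar, quantumCov, ← mul_kronecker_mul, Matrix.mul_one, trace_one_kronecker_mul]

variable [DecidableEq m] [DecidableEq n]

lemma quantumCov_one_kronecker_comm (ρ : Matrix (m × n) (m × n) ℂ) (P : Matrix m m ℂ)
    (Q : Matrix n n ℂ) :
    quantumCov ρ ((1 : Matrix m m ℂ) ⊗ₖ Q) (P ⊗ₖ (1 : Matrix n n ℂ)) =
      quantumCov ρ (P ⊗ₖ (1 : Matrix n n ℂ)) ((1 : Matrix m m ℂ) ⊗ₖ Q) := by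
  simp only [quantumCov, ← mul_kronecker_mul, Matrix.mul_one, Matrix.one_mul]
  ring

lemma two_mul_quantumCov_kronecker_le {ρ : Matrix (m × n) (m × n) ℂ} {P : Matrix m m ℂ}
    {Q : Matrix n n ℂ} (hρ : IsDensity ρ) (hP : P.IsHermitian) (hQ : Q.IsHermitian) :
    2 * quantumCov ρ (P ⊗ₖ (1 : Matrix n n ℂ)) ((1 : Matrix m m ℂ) ⊗ₖ Q) ≤
      quantumVar (ptrace₂ ρ) P + quantumVar (ptrace₁ ρ) Q := by
  have difference :=
    quantumVar_nonneg hρ ((isHermitian_kronecker hP isHermitian_one).sub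
      (isHermitian_kronecker isHermitian_one hQ))
  rw [← quantumVar_kronecker_one, ← quantumVar_one_kronecker, ← sub_nonneg]
  convert difference using 1
  simp only [quantumVar, quantumCov_sub_left, quantumCov_sub_right,
    quantumCov_one_kronecker_comm ρ P Q]
  ring

lemma quantumCov_kronecker_one_right (σ P : Matrix m m ℂ) {τ : Matrix n n ℂ} (hτ : τ.trace = 1)
    (M : Matrix (m × n) (m × n) ℂ) :
    quantumCov (σ ⊗ₖ τ) M (P ⊗ₖ (1 : Matrix n n ℂ)) = quantumCov σ (redFst τ M) P := by
  simp only [quantumCov, Matrix.mul_assoc, ← mul_kronecker_mul, Matrix.one_mul, trace_kronecker,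
    hτ, mul_one, trace_mul_kronecker_eq_redFst]

lemma quantumCov_kronecker_one_left (σ P : Matrix m m ℂ) {τ : Matrix n n ℂ} (hτ : τ.trace = 1)
    (M : Matrix (m × n) (m × n) ℂ) :
    quantumCov (σ ⊗ₖ τ) (P ⊗ₖ (1 : Matrix n n ℂ)) M = quantumCov σ P (redFst τ M) := by
  have cyclic : (P ⊗ₖ (1 : Matrix n n ℂ) * M * (σ ⊗ₖ τ)).trace = (P * redFst τ M * σ).trace := by
    rw [Matrix.mul_assoc, trace_mul_comm, Matrix.mul_assoc, ← mul_kronecker_mul, Matrix.mul_one,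
      trace_mul_kronecker_eq_redFst, ← Matrix.mul_assoc, trace_mul_comm, ← Matrix.mul_assoc]
  simp only [quantumCov, cyclic, ← mul_kronecker_mul, Matrix.one_mul, trace_kronecker, hτ, mul_one,
    trace_mul_kronecker_eq_redFst]

lemma quantumCov_one_kronecker_right {σ : Matrix m m ℂ} (hσ : σ.trace = 1) (τ Q : Matrix n n ℂ)
    (M : Matrix (m × n) (m × n) ℂ) :
    quantumCov (σ ⊗ₖ τ) M ((1 : Matrix m m ℂ) ⊗ₖ Q) = quantumCov τ (redSnd σ M) Q := by
  simp only [quantumCov, Matrix.mul_assoc, ← mul_kronecker_mul, trace_kronecker, hσ, one_mul,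
    trace_mul_kronecker_eq_redSnd]

lemma quantumCov_one_kronecker_left {σ : Matrix m m ℂ} (hσ : σ.trace = 1) (τ Q : Matrix n n ℂ)
    (M : Matrix (m × n) (m × n) ℂ) :
    quantumCov (σ ⊗ₖ τ) ((1 : Matrix m m ℂ) ⊗ₖ Q) M = quantumCov τ Q (redSnd σ M) := by
  have cyclic : ((1 : Matrix m m ℂ) ⊗ₖ Q * M * (σ ⊗ₖ τ)).trace = (Q * redSnd σ M * τ).trace := by
    rw [Matrix.mul_assoc, trace_mul_comm, Matrix.mul_assoc, ← mul_kronecker_mul, Matrix.mul_one,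
      trace_mul_kronecker_eq_redSnd, ← Matrix.mul_assoc, trace_mul_comm, ← Matrix.mul_assoc]
  simp only [quantumCov, cyclic, ← mul_kronecker_mul, trace_kronecker, hσ, one_mul,
    trace_mul_kronecker_eq_redSnd]

lemma quantumCov_kronecker_one_one_kronecker {σ : Matrix m m ℂ} {τ : Matrix n n ℂ}
    (hσ : σ.trace = 1) (hτ : τ.trace = 1) (P : Matrix m m ℂ) (Q : Matrix n n ℂ) :
    quantumCov (σ ⊗ₖ τ) (P ⊗ₖ (1 : Matrix n n ℂ)) ((1 : Matrix m m ℂ) ⊗ₖ Q) = 0 := by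
  simp only [quantumCov, ← mul_kronecker_mul, trace_kronecker, hσ, hτ, mul_one, one_mul, sub_self]

lemma quantumVar_redFst_add_quantumVar_redSnd_le {σ : Matrix m m ℂ} {τ : Matrix n n ℂ}
    {M : Matrix (m × n) (m × n) ℂ} (hσ : IsDensity σ) (hτ : IsDensity τ) (hM : M.IsHermitian) :
    quantumVar σ (redFst τ M) + quantumVar τ (redSnd σ M) ≤ quantumVar (σ ⊗ₖ τ) M := by
  have residual := quantumVar_nonneg (hσ.kronecker hτ)
    ((hM.sub (isHermitian_kronecker (redFst_isHermitian hτ.1.1 hM) isHermitian_one)).sub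
      (isHermitian_kronecker isHermitian_one (redSnd_isHermitian hσ.1.1 hM)))
  rw [← sub_nonneg]
  convert residual using 1
  simp only [quantumVar, quantumCov_sub_left, quantumCov_sub_right, quantumCov_one_kronecker_comm,
    quantumCov_kronecker_one_one_kronecker hσ.2 hτ.2]
  simp only [quantumCov_kronecker_one_left _ _ hτ.2, quantumCov_kronecker_one_right _ _ hτ.2,
    quantumCov_one_kronecker_left hσ.2, quantumCov_one_kronecker_right hσ.2,
    redFst_kronecker_one hτ.2, redSnd_one_kronecker hσ.2]
  ring

end Bipartite

section KrausDual

variable {ι m n : Type*} [Fintype ι] [Fintype m]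

/-- The Heisenberg-picture action `X ↦ ∑ l, K_l† X K_l` of the channel with Kraus operators `K`. -/
def krausDual (K : ι → Matrix m n ℂ) (X : Matrix m m ℂ) : Matrix n n ℂ :=
  ∑ l, (K l)ᴴ * X * K l

lemma krausDual_one [DecidableEq m] [DecidableEq n] {K : ι → Matrix m n ℂ}
    (hK : ∑ l, (K l)ᴴ * K l = 1) : krausDual K 1 = 1 := by
  simpa only [krausDual, Matrix.mul_one] using hK

lemma krausDual_conjTranspose (K : ι → Matrix m n ℂ) (X : Matrix m m ℂ) :
    krausDual K Xᴴ = (krausDual K X)ᴴ := by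
  simp only [krausDual, conjTranspose_sum, conjTranspose_mul, conjTranspose_conjTranspose,
    Matrix.mul_assoc]

lemma krausDual_isHermitian (K : ι → Matrix m n ℂ) {X : Matrix m m ℂ} (hX : X.IsHermitian) :
    (krausDual K X).IsHermitian := by
  rw [IsHermitian, ← krausDual_conjTranspose, hX.eq]

variable [Fintype n]

lemma sum_conjTranspose_mul_self_eq_krausDual_sub [DecidableEq n] {K : ι → Matrix m n ℂ}
    (hK : ∑ l, (K l)ᴴ * K l = 1) (X : Matrix m m ℂ) :
    ∑ l, (X * K l - K l * krausDual K X)ᴴ * (X * K l - K l * krausDual K X) =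
      krausDual K (Xᴴ * X) - (krausDual K X)ᴴ * krausDual K X := by
  set A := krausDual K X with hA
  have expand (l : ι) : (X * K l - K l * A)ᴴ * (X * K l - K l * A) =
      (K l)ᴴ * (Xᴴ * X) * K l - (K l)ᴴ * Xᴴ * K l * A - Aᴴ * ((K l)ᴴ * X * K l) +
        Aᴴ * ((K l)ᴴ * K l) * A := by
    simp only [conjTranspose_sub, conjTranspose_mul, Matrix.sub_mul, Matrix.mul_sub,
      Matrix.mul_assoc]
    abel
  calc ∑ l, (X * K l - K l * A)ᴴ * (X * K l - K l * A)
      = krausDual K (Xᴴ * X) - krausDual K Xᴴ * A - Aᴴ * krausDual K X + Aᴴ * 1 * A := by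
        simp only [expand, Finset.sum_add_distrib, Finset.sum_sub_distrib, ← Matrix.sum_mul,
          ← Matrix.mul_sum, hK, krausDual]
    _ = krausDual K (Xᴴ * X) - Aᴴ * A := by
        rw [krausDual_conjTranspose, ← hA, Matrix.mul_one]
        abel

lemma trace_krausDual_conjTranspose_mul_self_le [DecidableEq n] {K : ι → Matrix m n ℂ}
    (hK : ∑ l, (K l)ᴴ * K l = 1) (X : Matrix m m ℂ) {ρ : Matrix n n ℂ} (hρ : ρ.PosSemidef) :
    ((krausDual K X)ᴴ * krausDual K X * ρ).trace ≤ (krausDual K (Xᴴ * X) * ρ).trace := by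
  rw [← sub_nonneg, ← trace_sub, ← Matrix.sub_mul,
    ← sum_conjTranspose_mul_self_eq_krausDual_sub hK, Matrix.sum_mul, trace_sum]
  exact Finset.sum_nonneg fun l _ => trace_conjTranspose_mul_self_mul_nonneg hρ _

end KrausDual

section TriangleExpectation

/-- Regroups the six factors `C₂, A₁, A₂, B₁, B₂, C₁` by party, as `A₁A₂, B₁B₂, C₁C₂`. -/
def byParty {d : ℕ} (i : TriIdx d) : D2 d × D2 d × D2 d :=
  ((i.1.2, i.2.1.1), (i.2.1.2, i.2.2.1), (i.2.2.2, i.1.1))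

/-- The product observable `M_A ⊗ M_B ⊗ M_C` on the six factors of the triangle network. -/
def triObs {d : ℕ} (MA MB MC : Matrix (D2 d) (D2 d) ℂ) : Matrix (TriIdx d) (TriIdx d) ℂ :=
  (MA ⊗ₖ (MB ⊗ₖ MC)).submatrix byParty byParty

variable {d nA nB nC LA LB LC : ℕ}

lemma globalKraus_conjTranspose_mul_kronecker_mul (KA : Matrix (Fin nA) (D2 d) ℂ)
    (KB : Matrix (Fin nB) (D2 d) ℂ) (KC : Matrix (Fin nC) (D2 d) ℂ)
    (P : Matrix (Fin nA) (Fin nA) ℂ) (Q : Matrix (Fin nB) (Fin nB) ℂ)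
    (R : Matrix (Fin nC) (Fin nC) ℂ) :
    (globalKraus KA KB KC)ᴴ * (P ⊗ₖ (Q ⊗ₖ R)) * globalKraus KA KB KC =
      triObs (KAᴴ * P * KA) (KBᴴ * Q * KB) (KCᴴ * R * KC) := by
  have globalKraus_eq : globalKraus KA KB KC = (KA ⊗ₖ (KB ⊗ₖ KC)).submatrix id byParty := by
    ext o i
    simp only [globalKraus, of_apply, submatrix_apply, kroneckerMap_apply, byParty, id, mul_assoc]
  simp only [triObs, mul_kronecker_mul, ← conjTranspose_kronecker, globalKraus_eq,
    conjTranspose_submatrix]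
  rfl

lemma triObs_sum {ι κ μ : Type*} [Fintype ι] [Fintype κ] [Fintype μ]
    (MA : ι → Matrix (D2 d) (D2 d) ℂ) (MB : κ → Matrix (D2 d) (D2 d) ℂ)
    (MC : μ → Matrix (D2 d) (D2 d) ℂ) :
    triObs (∑ l, MA l) (∑ m, MB m) (∑ n, MC n) = ∑ l, ∑ m, ∑ n, triObs (MA l) (MB m) (MC n) := by
  ext p q
  simp only [triObs, submatrix_apply, kroneckerMap_apply, Matrix.sum_apply,
    Finset.sum_mul_sum]
  simp only [Finset.mul_sum]

lemma trace_kronecker_mul_ctnState (ρa ρb ρc : Matrix (D2 d) (D2 d) ℂ)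
    (KA : Fin LA → Matrix (Fin nA) (D2 d) ℂ) (KB : Fin LB → Matrix (Fin nB) (D2 d) ℂ)
    (KC : Fin LC → Matrix (Fin nC) (D2 d) ℂ) (P : Matrix (Fin nA) (Fin nA) ℂ)
    (Q : Matrix (Fin nB) (Fin nB) ℂ) (R : Matrix (Fin nC) (Fin nC) ℂ) :
    ((P ⊗ₖ (Q ⊗ₖ R)) * ctnState ρa ρb ρc KA KB KC).trace =
      (triObs (krausDual KA P) (krausDual KB Q) (krausDual KC R) * btnState ρa ρb ρc).trace := by
  simp only [ctnState, krausDual, triObs_sum, Matrix.mul_sum, Matrix.sum_mul, trace_sum]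
  refine Finset.sum_congr rfl fun l _ => Finset.sum_congr rfl fun m _ =>
    Finset.sum_congr rfl fun n _ => ?_
  rw [← globalKraus_conjTranspose_mul_kronecker_mul, ← Matrix.mul_assoc, trace_mul_comm]
  simp only [Matrix.mul_assoc]

lemma redSnd_ptrace₁_apply {l m n : Type*} [Fintype l] [Fintype m] [Fintype n] [DecidableEq l]
    [DecidableEq n] (ρ : Matrix (l × m) (l × m) ℂ) (M : Matrix (m × n) (m × n) ℂ) (i j : n) :
    redSnd (ptrace₁ ρ) M i j =
      ∑ x, ∑ x', (1 : Matrix l l ℂ) x.1 x'.1 * M (x.2, i) (x'.2, j) * ρ x' x := by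
  simp only [redSnd_apply, ptrace₁, of_apply, Finset.mul_sum, Fintype.sum_prod_type_right,
    one_apply, ite_mul, one_mul, zero_mul, Finset.sum_ite_eq, Finset.mem_univ, if_true]
  exact Finset.sum_congr rfl fun _ _ => Finset.sum_comm

lemma redFst_ptrace₂_apply {l m n : Type*} [Fintype l] [Fintype m] [Fintype n] [DecidableEq l]
    [DecidableEq n] (ρ : Matrix (m × l) (m × l) ℂ) (M : Matrix (n × m) (n × m) ℂ) (i j : n) :
    redFst (ptrace₂ ρ) M i j =
      ∑ z, ∑ z', M (i, z.1) (j, z'.1) * (1 : Matrix l l ℂ) z.2 z'.2 * ρ z' z := by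
  simp only [redFst_apply, ptrace₂, of_apply, Finset.mul_sum, Fintype.sum_prod_type,
    one_apply, mul_ite, mul_one, mul_zero, ite_mul, zero_mul, Finset.sum_ite_eq, Finset.mem_univ,
    if_true]
  exact Finset.sum_congr rfl fun _ _ => Finset.sum_comm

lemma trace_triObs_one_mul_btnState (ρa ρb ρc MA MB : Matrix (D2 d) (D2 d) ℂ) :
    (triObs MA MB 1 * btnState ρa ρb ρc).trace =
      ((redSnd (ptrace₁ ρb) MA ⊗ₖ redFst (ptrace₂ ρa) MB) * ρc).trace := by
  -- Isolate the source `ρc` on `A₂B₁` from the sources `ρb` on `C₂A₁` and `ρa` on `B₂C₁`.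
  let e : (D2 d × D2 d) × D2 d ≃ TriIdx d :=
    ⟨fun t => (t.1.1, t.2, t.1.2), fun p => ((p.1, p.2.2), p.2.1), fun _ => rfl, fun _ => rfl⟩
  have btnState_submatrix : (btnState ρa ρb ρc).submatrix e e = (ρb ⊗ₖ ρa) ⊗ₖ ρc := by
    ext s t
    simp only [e, btnState, submatrix_apply, Equiv.coe_fn_mk, kroneckerMap_apply]
    ring
  have redSnd_triObs : redSnd (ρb ⊗ₖ ρa) ((triObs MA MB 1).submatrix e e) =
      redSnd (ptrace₁ ρb) MA ⊗ₖ redFst (ptrace₂ ρa) MB := by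
    ext i j
    rw [kroneckerMap_apply, redSnd_apply, redSnd_ptrace₁_apply, redFst_ptrace₂_apply]
    simp only [Finset.sum_mul_sum]
    rw [Fintype.sum_prod_type]
    refine Finset.sum_congr rfl fun x _ => Finset.sum_congr rfl fun z _ => ?_
    rw [Fintype.sum_prod_type]
    refine Finset.sum_congr rfl fun x' _ => Finset.sum_congr rfl fun z' _ => ?_
    have one_apply_swap : (1 : Matrix (D2 d) (D2 d) ℂ) (z.2, x.1) (z'.2, x'.1) =
        (1 : Matrix (Fin d) (Fin d) ℂ) x.1 x'.1 * (1 : Matrix (Fin d) (Fin d) ℂ) z.2 z'.2 := by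
      rw [← one_kronecker_one, kroneckerMap_apply, mul_comm]
    simp only [e, triObs, byParty, submatrix_apply, Equiv.coe_fn_mk, kroneckerMap_apply,
      one_apply_swap]
    ring
  rw [← redSnd_triObs, ← trace_mul_kronecker_eq_redSnd, ← btnState_submatrix, submatrix_mul_equiv,
    trace_submatrix_equiv]

end TriangleExpectation

section Rotation

/-- Cyclic relabelling of a triple of systems. -/
def rotateTriple (α β γ : Type*) : β × γ × α ≃ α × β × γ :=
  (Equiv.prodAssoc β γ α).symm.trans (Equiv.prodComm (β × γ) α)

lemma kronecker_submatrix_rotateTriple {α β γ : Type*} (P : Matrix α α ℂ) (Q : Matrix β β ℂ)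
    (R : Matrix γ γ ℂ) :
    (P ⊗ₖ (Q ⊗ₖ R)).submatrix (rotateTriple α β γ) (rotateTriple α β γ) = Q ⊗ₖ (R ⊗ₖ P) := by
  ext i j
  exact (mul_comm _ _).trans (mul_assoc _ _ _)

variable {d nA nB nC LA LB LC : ℕ}

lemma outA_eq_kronecker (M : Matrix (Fin nA) (Fin nA) ℂ) :
    outA M = M ⊗ₖ ((1 : Matrix (Fin nB) (Fin nB) ℂ) ⊗ₖ (1 : Matrix (Fin nC) (Fin nC) ℂ)) := by
  rw [one_kronecker_one, outA]

lemma outB_eq_kronecker (M : Matrix (Fin nB) (Fin nB) ℂ) :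
    outB M = (1 : Matrix (Fin nA) (Fin nA) ℂ) ⊗ₖ (M ⊗ₖ (1 : Matrix (Fin nC) (Fin nC) ℂ)) := by
  ext p q
  by_cases hA : p.1 = q.1 <;> by_cases hC : p.2.2 = q.2.2 <;> simp [outB, one_apply, hA, hC]

lemma outA_submatrix_rotateTriple (M : Matrix (Fin nA) (Fin nA) ℂ) :
    (outA (nB := nB) (nC := nC) M).submatrix (rotateTriple _ _ _) (rotateTriple _ _ _) =
      outC M := by
  rw [outA_eq_kronecker, kronecker_submatrix_rotateTriple, outC]

lemma outB_submatrix_rotateTriple (M : Matrix (Fin nB) (Fin nB) ℂ) :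
    (outB (nA := nA) (nC := nC) M).submatrix (rotateTriple _ _ _) (rotateTriple _ _ _) =
      outA M := by
  rw [outB_eq_kronecker, kronecker_submatrix_rotateTriple, outA_eq_kronecker]

lemma outC_submatrix_rotateTriple (M : Matrix (Fin nC) (Fin nC) ℂ) :
    (outC (nA := nA) (nB := nB) M).submatrix (rotateTriple _ _ _) (rotateTriple _ _ _) =
      outB M := by
  rw [outC, kronecker_submatrix_rotateTriple, outB_eq_kronecker]

lemma ctnState_submatrix_rotateTriple (ρa ρb ρc : Matrix (D2 d) (D2 d) ℂ)
    (KA : Fin LA → Matrix (Fin nA) (D2 d) ℂ) (KB : Fin LB → Matrix (Fin nB) (D2 d) ℂ)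
    (KC : Fin LC → Matrix (Fin nC) (D2 d) ℂ) :
    (ctnState ρa ρb ρc KA KB KC).submatrix (rotateTriple _ _ _) (rotateTriple _ _ _) =
      ctnState ρb ρc ρa KB KC KA := by
  have globalKraus_rotate (l m n) : globalKraus (KB m) (KC n) (KA l) =
      (globalKraus (KA l) (KB m) (KC n)).submatrix (rotateTriple _ _ _) (rotateTriple _ _ _) := by
    ext o i
    exact (mul_comm _ _).trans (mul_assoc _ _ _).symm
  have btnState_rotate : btnState ρb ρc ρa =
      (btnState ρa ρb ρc).submatrix (rotateTriple _ _ _) (rotateTriple _ _ _) :=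
    (kronecker_submatrix_rotateTriple ρb ρc ρa).symm
  simp only [ctnState, globalKraus_rotate, btnState_rotate, conjTranspose_submatrix,
    submatrix_mul_equiv]
  ext p q
  simp only [submatrix_apply, Matrix.sum_apply]
  rw [Finset.sum_comm]
  exact Finset.sum_congr rfl fun _ _ => Finset.sum_comm

variable (ω : Matrix (Fin nA × Fin nB × Fin nC) (Fin nA × Fin nB × Fin nC) ℂ)
  (X : Matrix (Fin nA) (Fin nA) ℂ) (Y : Matrix (Fin nB) (Fin nB) ℂ)
  (Z : Matrix (Fin nC) (Fin nC) ℂ)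

lemma quantumVar_outB :
    quantumVar ω (outB Y) =
      quantumVar (ω.submatrix (rotateTriple _ _ _) (rotateTriple _ _ _)) (outA Y) := by
  rw [quantumVar, ← quantumCov_submatrix_equiv (rotateTriple _ _ _), outB_submatrix_rotateTriple]

lemma quantumVar_outC :
    quantumVar ω (outC Z) =
      quantumVar (ω.submatrix (rotateTriple _ _ _) (rotateTriple _ _ _)) (outB Z) := by
  rw [quantumVar, ← quantumCov_submatrix_equiv (rotateTriple _ _ _), outC_submatrix_rotateTriple]

lemma quantumCov_outB_outC :
    quantumCov ω (outB Y) (outC Z) =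
      quantumCov (ω.submatrix (rotateTriple _ _ _) (rotateTriple _ _ _)) (outA Y) (outB Z) := by
  rw [← quantumCov_submatrix_equiv (rotateTriple _ _ _), outB_submatrix_rotateTriple,
    outC_submatrix_rotateTriple]

lemma quantumCov_outC_outA :
    quantumCov ω (outC Z) (outA X) =
      quantumCov (ω.submatrix (rotateTriple _ _ _) (rotateTriple _ _ _)) (outB Z) (outC X) := by
  rw [← quantumCov_submatrix_equiv (rotateTriple _ _ _), outC_submatrix_rotateTriple,
    outA_submatrix_rotateTriple]

end Rotation

section TriangleCovariance

variable {d nA nB nC LA LB LC : ℕ} {ρa ρb ρc : Matrix (D2 d) (D2 d) ℂ}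
  {KA : Fin LA → Matrix (Fin nA) (D2 d) ℂ} {KB : Fin LB → Matrix (Fin nB) (D2 d) ℂ}
  {KC : Fin LC → Matrix (Fin nC) (D2 d) ℂ}
  {X : Matrix (Fin nA) (Fin nA) ℂ} {Y : Matrix (Fin nB) (Fin nB) ℂ}
  {Z : Matrix (Fin nC) (Fin nC) ℂ}

lemma quantumCov_outA_outB (ha : ρa.trace = 1) (hb : ρb.trace = 1)
    (hKA : ∑ l, (KA l)ᴴ * KA l = 1) (hKB : ∑ l, (KB l)ᴴ * KB l = 1)
    (hKC : ∑ l, (KC l)ᴴ * KC l = 1) :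
    quantumCov (ctnState ρa ρb ρc KA KB KC) (outA X) (outB Y) =
      quantumCov ρc (redSnd (ptrace₁ ρb) (krausDual KA X) ⊗ₖ 1)
        (1 ⊗ₖ redFst (ptrace₂ ρa) (krausDual KB Y)) := by
  simp only [quantumCov, outA_eq_kronecker, outB_eq_kronecker, ← mul_kronecker_mul, Matrix.one_mul,
    Matrix.mul_one, trace_kronecker_mul_ctnState, krausDual_one, hKA, hKB, hKC,
    trace_triObs_one_mul_btnState, redFst_one ((trace_ptrace₂ ρa).trans ha),
    redSnd_one ((trace_ptrace₁ ρb).trans hb)]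

lemma two_mul_quantumCov_outA_outB_le (ha : IsDensity ρa) (hb : IsDensity ρb) (hc : IsDensity ρc)
    (hKA : ∑ l, (KA l)ᴴ * KA l = 1) (hKB : ∑ l, (KB l)ᴴ * KB l = 1)
    (hKC : ∑ l, (KC l)ᴴ * KC l = 1) (hX : X.IsHermitian) (hY : Y.IsHermitian) :
    2 * quantumCov (ctnState ρa ρb ρc KA KB KC) (outA X) (outB Y) ≤
      quantumVar (ptrace₂ ρc) (redSnd (ptrace₁ ρb) (krausDual KA X)) +
        quantumVar (ptrace₁ ρc) (redFst (ptrace₂ ρa) (krausDual KB Y)) := by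
  rw [quantumCov_outA_outB ha.2 hb.2 hKA hKB hKC]
  exact two_mul_quantumCov_kronecker_le hc
    (redSnd_isHermitian hb.ptrace₁.1.1 (krausDual_isHermitian KA hX))
    (redFst_isHermitian ha.ptrace₂.1.1 (krausDual_isHermitian KB hY))

lemma trace_outA_mul_ctnState (ha : ρa.trace = 1) (hKB : ∑ l, (KB l)ᴴ * KB l = 1)
    (hKC : ∑ l, (KC l)ᴴ * KC l = 1) (X : Matrix (Fin nA) (Fin nA) ℂ) :
    (outA X * ctnState ρa ρb ρc KA KB KC).trace =
      (krausDual KA X * (ptrace₁ ρb ⊗ₖ ptrace₂ ρc)).trace := by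
  rw [outA_eq_kronecker, trace_kronecker_mul_ctnState, krausDual_one hKB, krausDual_one hKC,
    trace_triObs_one_mul_btnState, redFst_one ((trace_ptrace₂ ρa).trans ha),
    trace_kronecker_one_mul, trace_mul_kronecker_eq_redSnd]

lemma quantumVar_krausDual_le (ha : ρa.trace = 1) (hb : IsDensity ρb) (hc : IsDensity ρc)
    (hKA : ∑ l, (KA l)ᴴ * KA l = 1) (hKB : ∑ l, (KB l)ᴴ * KB l = 1)
    (hKC : ∑ l, (KC l)ᴴ * KC l = 1) (hX : X.IsHermitian) :
    quantumVar (ptrace₁ ρb ⊗ₖ ptrace₂ ρc) (krausDual KA X) ≤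
      quantumVar (ctnState ρa ρb ρc KA KB KC) (outA X) := by
  have outA_sq : (outA X * outA X : Matrix (Fin nA × Fin nB × Fin nC) _ ℂ) = outA (X * X) := by
    rw [outA, outA, ← mul_kronecker_mul, Matrix.mul_one]
  have kadisonSchwarz := trace_krausDual_conjTranspose_mul_self_le hKA X
    (hb.ptrace₁.kronecker hc.ptrace₂).1
  rw [← krausDual_conjTranspose, hX.eq] at kadisonSchwarz
  simp only [quantumVar, quantumCov, outA_sq, trace_outA_mul_ctnState ha hKB hKC]
  exact sub_le_sub_right kadisonSchwarz _

lemma quantumVar_redFst_add_quantumVar_redSnd_le_outA (ha : ρa.trace = 1) (hb : IsDensity ρb)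
    (hc : IsDensity ρc) (hKA : ∑ l, (KA l)ᴴ * KA l = 1) (hKB : ∑ l, (KB l)ᴴ * KB l = 1)
    (hKC : ∑ l, (KC l)ᴴ * KC l = 1) (hX : X.IsHermitian) :
    quantumVar (ptrace₁ ρb) (redFst (ptrace₂ ρc) (krausDual KA X)) +
        quantumVar (ptrace₂ ρc) (redSnd (ptrace₁ ρb) (krausDual KA X)) ≤
      quantumVar (ctnState ρa ρb ρc KA KB KC) (outA X) :=
  (quantumVar_redFst_add_quantumVar_redSnd_le hb.ptrace₁ hc.ptrace₂
    (krausDual_isHermitian KA hX)).trans (quantumVar_krausDual_le ha hb hc hKA hKB hKC hX)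

lemma two_mul_sum_quantumCov_ctnState_le (ha : IsDensity ρa) (hb : IsDensity ρb)
    (hc : IsDensity ρc) (hKA : ∑ l, (KA l)ᴴ * KA l = 1) (hKB : ∑ l, (KB l)ᴴ * KB l = 1)
    (hKC : ∑ l, (KC l)ᴴ * KC l = 1) (hX : X.IsHermitian) (hY : Y.IsHermitian)
    (hZ : Z.IsHermitian) {ω : Matrix (Fin nA × Fin nB × Fin nC) (Fin nA × Fin nB × Fin nC) ℂ}
    (hω : ctnState ρa ρb ρc KA KB KC = ω) :
    2 * (quantumCov ω (outA X) (outB Y) + quantumCov ω (outB Y) (outC Z) +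
        quantumCov ω (outC Z) (outA X)) ≤
      quantumVar ω (outA X) + quantumVar ω (outB Y) + quantumVar ω (outC Z) := by
  subst hω
  rw [quantumVar_outB, quantumVar_outC, quantumVar_outB, quantumCov_outB_outC,
    quantumCov_outC_outA, quantumCov_outB_outC]
  simp only [ctnState_submatrix_rotateTriple]
  have edges := add_le_add (add_le_add
    (two_mul_quantumCov_outA_outB_le ha hb hc hKA hKB hKC hX hY)
    (two_mul_quantumCov_outA_outB_le hb hc ha hKB hKC hKA hY hZ))
    (two_mul_quantumCov_outA_outB_le hc ha hb hKC hKA hKB hZ hX)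
  have parties := add_le_add (add_le_add
    (quantumVar_redFst_add_quantumVar_redSnd_le_outA ha.2 hb hc hKA hKB hKC hX)
    (quantumVar_redFst_add_quantumVar_redSnd_le_outA hb.2 hc ha hKB hKC hKA hY))
    (quantumVar_redFst_add_quantumVar_redSnd_le_outA hc.2 ha hb hKC hKA hKB hZ)
  refine le_trans (le_of_eq_of_le ?_ edges) (le_of_eq_of_le ?_ parties) <;> ring

end TriangleCovariance

section WState

/-- The Pauli matrix `σ_x`. -/
def pauliX : Matrix (Fin 2) (Fin 2) ℂ := !![0, 1; 1, 0]

lemma pauliX_isHermitian : pauliX.IsHermitian := by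
  ext i j
  fin_cases i <;> fin_cases j <;> simp [pauliX]

lemma pauliX_trace : pauliX.trace = 0 := by
  simp [pauliX, trace_fin_two]

lemma pauliX_mul_self : pauliX * pauliX = 1 := by
  simp [pauliX, one_fin_two]

lemma ofReal_sqrt_three_sq : ((√3 : ℝ) : ℂ) ^ 2 = 3 := by
  norm_cast
  exact Real.sq_sqrt zero_le_three

lemma star_wVec : star wVec = wVec := by
  ext i
  simp only [wVec, Pi.star_apply]
  split_ifs <;> simp

lemma wVec_rotateTriple (i : Fin 2 × Fin 2 × Fin 2) : wVec (rotateTriple _ _ _ i) = wVec i := by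
  fin_cases i <;> simp [wVec, rotateTriple]

lemma wVec_dotProduct_self : wVec ⬝ᵥ wVec = 1 := by
  norm_num [dotProduct, Fintype.sum_prod_type, wVec, ← sq, ofReal_sqrt_three_sq]

lemma wVec_dotProduct_pauliX_kronecker_one :
    wVec ⬝ᵥ (pauliX ⊗ₖ ((1 : Matrix (Fin 2) (Fin 2) ℂ) ⊗ₖ (1 : Matrix (Fin 2) (Fin 2) ℂ))) *ᵥ wVec =
      0 := by
  simp [dotProduct, mulVec, Fintype.sum_prod_type, wVec, pauliX]

lemma wVec_dotProduct_pauliX_kronecker_pauliX :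
    wVec ⬝ᵥ (pauliX ⊗ₖ (pauliX ⊗ₖ (1 : Matrix (Fin 2) (Fin 2) ℂ))) *ᵥ wVec = 2 / 3 := by
  norm_num [dotProduct, mulVec, Fintype.sum_prod_type, wVec, pauliX, ← sq, ofReal_sqrt_three_sq]

lemma trace_mul_wNoisy (v : ℝ) (O : Matrix (Fin 2 × Fin 2 × Fin 2) (Fin 2 × Fin 2 × Fin 2) ℂ) :
    (O * wNoisy v).trace = v * (wVec ⬝ᵥ O *ᵥ wVec) + (1 - v) / 8 * O.trace := by
  simp only [wNoisy, star_wVec, Matrix.mul_add, Matrix.mul_smul, Matrix.mul_one, trace_add,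
    trace_smul, mul_vecMulVec, trace_vecMulVec, dotProduct_comm wVec, smul_eq_mul]
  push_cast
  ring

lemma wNoisy_submatrix_rotateTriple (v : ℝ) :
    (wNoisy v).submatrix (rotateTriple _ _ _) (rotateTriple _ _ _) = wNoisy v := by
  ext i j
  simp [wNoisy, vecMulVec_apply, wVec_rotateTriple, one_apply]

lemma trace_outA_pauliX_mul_wNoisy (v : ℝ) : (outA pauliX * wNoisy v).trace = 0 := by
  rw [trace_mul_wNoisy, outA_eq_kronecker, wVec_dotProduct_pauliX_kronecker_one, trace_kronecker,
    pauliX_trace]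
  ring

lemma quantumCov_wNoisy_outA_outB (v : ℝ) :
    quantumCov (wNoisy v) (outA pauliX) (outB pauliX) = 2 * v / 3 := by
  rw [quantumCov, trace_outA_pauliX_mul_wNoisy, outA_eq_kronecker, outB_eq_kronecker,
    ← mul_kronecker_mul, ← mul_kronecker_mul, Matrix.mul_one, Matrix.one_mul, Matrix.mul_one,
    trace_mul_wNoisy, wVec_dotProduct_pauliX_kronecker_pauliX, trace_kronecker, pauliX_trace]
  ring

lemma quantumVar_wNoisy_outA (v : ℝ) : quantumVar (wNoisy v) (outA pauliX) = 1 := by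
  rw [quantumVar, quantumCov, trace_outA_pauliX_mul_wNoisy, outA, ← mul_kronecker_mul,
    pauliX_mul_self, Matrix.mul_one, one_kronecker_one, trace_mul_wNoisy, one_mulVec,
    wVec_dotProduct_self, trace_one, Fintype.card_prod, Fintype.card_prod, Fintype.card_fin]
  push_cast
  ring

end WState

/-- For `3/4 < v ≤ 1`, the noisy W state
`v|W⟩⟨W| + (1−v)·1/8` cannot be prepared in the triangle network with local
channels. -/
theorem stmt13 (v : ℝ) (hv₁ : 3 / 4 < v) (hv₂ : v ≤ 1) :
    ¬ ∃ (d : ℕ), 1 ≤ d ∧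
      ∃ (LA LB LC : ℕ)
        (ρa ρb ρc : Matrix (D2 d) (D2 d) ℂ)
        (KA : Fin LA → Matrix (Fin 2) (D2 d) ℂ)
        (KB : Fin LB → Matrix (Fin 2) (D2 d) ℂ)
        (KC : Fin LC → Matrix (Fin 2) (D2 d) ℂ),
        IsDensity ρa ∧ IsDensity ρb ∧ IsDensity ρc ∧
        (∑ l, (KA l)ᴴ * KA l = 1) ∧
        (∑ l, (KB l)ᴴ * KB l = 1) ∧
        (∑ l, (KC l)ᴴ * KC l = 1) ∧
        ctnState ρa ρb ρc KA KB KC = wNoisy v := by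
  rintro ⟨d, -, LA, LB, LC, ρa, ρb, ρc, KA, KB, KC, ha, hb, hc, hKA, hKB, hKC, hω⟩
  have bound := two_mul_sum_quantumCov_ctnState_le ha hb hc hKA hKB hKC pauliX_isHermitian
    pauliX_isHermitian pauliX_isHermitian hω
  simp only [quantumCov_outB_outC, quantumCov_outC_outA, quantumVar_outB, quantumVar_outC,
    wNoisy_submatrix_rotateTriple, quantumCov_wNoisy_outA_outB, quantumVar_wNoisy_outA] at bound
  have four_mul_le : 4 * v ≤ 3 := by
    rw [← Complex.real_le_real]
    push_cast
    convert bound using 1 <;> ring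
  linarith
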